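/- Let d ≥ 2 and write points of ℝ^d as (y,x) with y ∈ ℝ and x ∈ ℝ^{d−1}, with dual variables (η,ξ). Let c₀ > 0 and C₀ > 0, and let a ∈ C_c^∞(ℝ^{2d}) (variables (y,x,η,ξ)) satisfy a(y,x,η,ξ) = 0 whenever y ≤ c₀ or |η| > C₀|ξ|. Let b : ℝ × ℝ^{d−1} × ℝ^{d−1} → ℂ (variables (y,x,ξ)) be smooth, compactly supported in (x,ξ) uniformly in y, with all derivatives bounded on ℝ × ℝ^{2(d−1)}. For h ∈ (0,1] define, for u ∈ C_c^∞(ℝ^d): (A_h u)(y,x) = (2πh)^{−d} ∫ e^{i((y−y')η + (x−x')·ξ)/h} a(y,x,η,ξ) u(y',x') dy' dx' dη dξ; (B_h u)(y,x) = (2πh)^{−(d−1)} ∫ e^{i(x−x')·ξ/h} b(y,x,ξ) u(y,x') dx' dξ; and (C_h u)(y,x) = (2πh)^{−d} ∫ e^{i((y−y')η + (x−x')·ξ)/h} a(y,x,η,ξ) b(y,x,ξ) u(y',x') dy' dx' dη dξ. Then there exists a constant C > 0, depending only on a and b, such that for every h ∈ (0,1] and every u ∈ C_c^∞(ℝ^d),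 ‖A_h B_h u − C_h u‖_{L²(ℝ^d)} ≤ C h ‖u‖_{L²(ℝ^d)}. -/

import Mathlib

/-!
Put `H = 2πh`. Carrying out the momentum integral and substituting `y' = p + Hz` turns each
operator into a superposition of translations:
`A_h v (p) = ∫ â_p(z) v(p + Hz) dz` and `B_h u (p) = ∫ b̂_p(w) u(p + (0, Hw)) dw`,
where `â_p` and `b̂_p` are the Fourier transforms of the symbols in the momentum variable at the
base point `p` (`opInterior_eq`, `opTangential_eq`, both from `quantization_eq`).

Fourier inversion for `b(p, ·)` writes the transform of the product symbol as a convolution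
of `â_p` with `b̂_p` in the tangential variable (`pairFT_mul`), so that
`C_h u (p) = ∫ â_p(z) ∫ b̂_p(w) u(p + Hz + (0, Hw)) dw dz` (`frozen_composition`): this is `A_h`
applied to the tangential operator whose coefficients are frozen at `p`. Consequently
`(A_h B_h - C_h) u (p) = ∫∫ â_p(z) (b̂_{p+Hz}(w) - b̂_p(w)) u(p + Hz + (0, Hw)) dw dz`.

The symbols have bounded derivatives and support bounded in momentum, so `â_p(z)`, `b̂_p(w)` and
the Lipschitz constant of `p ↦ b̂_p(w)` decay faster than any power, uniformly in `p`
(`pairFT_slice_decay`). The kernel is therefore at most `h φ(z, w)` with `φ` integrable and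
independent of `h`: the increment of `b̂` contributes the factor `H‖z‖`, and `‖z‖` is absorbed by
the decay of `â_p` (`enorm_difference_le`). Cauchy–Schwarz and the invariance of the `L²` norm
under translations (`lintegral_weighted_translates`) bound the operator norm by `h ∫ φ`.
-/

open MeasureTheory Real
open scoped RealInnerProductSpace

/-- The semiclassical quantization of the interior symbol `a(y,x,η,ξ)`:
`(A_h v)(y,x) = (2πh)^{−d} ∫ e^{i((y−y')η + (x−x')·ξ)/h} a(y,x,η,ξ) v(y',x') dy'dx'dηdξ`. -/
noncomputable def opInterior (d : ℕ) (h : ℝ)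
    (a : ℝ → EuclideanSpace ℝ (Fin (d - 1)) → ℝ → EuclideanSpace ℝ (Fin (d - 1)) → ℂ)
    (v : ℝ × EuclideanSpace ℝ (Fin (d - 1)) → ℂ)
    (p : ℝ × EuclideanSpace ℝ (Fin (d - 1))) : ℂ :=
  (((2 * π * h) ^ d : ℝ) : ℂ)⁻¹ *
    ∫ q : (ℝ × EuclideanSpace ℝ (Fin (d - 1))) × ℝ × EuclideanSpace ℝ (Fin (d - 1)),
      Complex.exp (Complex.I *
          Complex.ofReal (((p.1 - q.1.1) * q.2.1 + ⟪p.2 - q.1.2, q.2.2⟫) / h)) *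
        a p.1 p.2 q.2.1 q.2.2 * v q.1

/-- The tangential semiclassical quantization of the boundary symbol `b(y,x,ξ)`:
`(B_h u)(y,x) = (2πh)^{−(d−1)} ∫ e^{i(x−x')·ξ/h} b(y,x,ξ) u(y,x') dx'dξ`. -/
noncomputable def opTangential (d : ℕ) (h : ℝ)
    (b : ℝ → EuclideanSpace ℝ (Fin (d - 1)) → EuclideanSpace ℝ (Fin (d - 1)) → ℂ)
    (u : ℝ × EuclideanSpace ℝ (Fin (d - 1)) → ℂ)
    (p : ℝ × EuclideanSpace ℝ (Fin (d - 1))) : ℂ :=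
  (((2 * π * h) ^ (d - 1) : ℝ) : ℂ)⁻¹ *
    ∫ q : EuclideanSpace ℝ (Fin (d - 1)) × EuclideanSpace ℝ (Fin (d - 1)),
      Complex.exp (Complex.I * Complex.ofReal (⟪p.2 - q.1, q.2⟫ / h)) *
        b p.1 p.2 q.2 * u (p.1, q.1)

/-- The quantization `C_h` of the product symbol `a(y,x,η,ξ) b(y,x,ξ)`. -/
noncomputable def opProduct (d : ℕ) (h : ℝ)
    (a : ℝ → EuclideanSpace ℝ (Fin (d - 1)) → ℝ → EuclideanSpace ℝ (Fin (d - 1)) → ℂ)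
    (b : ℝ → EuclideanSpace ℝ (Fin (d - 1)) → EuclideanSpace ℝ (Fin (d - 1)) → ℂ)
    (u : ℝ × EuclideanSpace ℝ (Fin (d - 1)) → ℂ)
    (p : ℝ × EuclideanSpace ℝ (Fin (d - 1))) : ℂ :=
  (((2 * π * h) ^ d : ℝ) : ℂ)⁻¹ *
    ∫ q : (ℝ × EuclideanSpace ℝ (Fin (d - 1))) × ℝ × EuclideanSpace ℝ (Fin (d - 1)),
      Complex.exp (Complex.I *
          Complex.ofReal (((p.1 - q.1.1) * q.2.1 + ⟪p.2 - q.1.2, q.2.2⟫) / h)) *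
        (a p.1 p.2 q.2.1 q.2.2 * b p.1 p.2 q.2.2) * u q.1

open scoped FourierTransform

/-! ### Fourier transform with respect to a bilinear pairing -/

section General

variable {V : Type*} [NormedAddCommGroup V] [NormedSpace ℝ V]

lemma continuous_pairing (L : V →L[ℝ] V →L[ℝ] ℝ) : Continuous fun p : V × V => L p.1 p.2 := by
  fun_prop

variable [MeasureSpace V]

/-- The Fourier transform `z ↦ ∫ e^{-2πi L(v, z)} s(v) dv` with respect to a bilinear pairing `L`
on `V`. A general pairing is allowed because `ℝ × ℝⁿ` carries the sup norm and is not an inner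
product space. -/
noncomputable def pairFT (L : V →L[ℝ] V →L[ℝ] ℝ) (s : V → ℂ) (z : V) : ℂ :=
  VectorFourier.fourierIntegral 𝐞 volume L.toLinearMap₁₂ s z

lemma pairFT_eq (L : V →L[ℝ] V →L[ℝ] ℝ) (s : V → ℂ) (z : V) :
    pairFT L s z = ∫ v, Complex.exp (Complex.I * ((-(2 * π * L v z) : ℝ) : ℂ)) * s v := by
  unfold pairFT VectorFourier.fourierIntegral
  refine integral_congr_ae (Filter.Eventually.of_forall fun v => ?_)
  have hv : L.toLinearMap₁₂ v z = L v z := rfl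
  simp only [hv, Circle.smul_def, Real.fourierChar_apply, smul_eq_mul]
  congr 2
  push_cast
  ring

lemma norm_exp_I_mul_ofReal' (t : ℝ) : ‖Complex.exp (Complex.I * (t : ℂ))‖ = 1 := by
  rw [mul_comm]; exact Complex.norm_exp_ofReal_mul_I t

variable [BorelSpace V]

lemma pairFT_continuous (L : V →L[ℝ] V →L[ℝ] ℝ) {s : V → ℂ} (hs : Integrable s) :
    Continuous (pairFT L s) :=
  VectorFourier.fourierIntegral_continuous Real.continuous_fourierChar
    (continuous_pairing L) hs

lemma pairFT_sub (L : V →L[ℝ] V →L[ℝ] ℝ) {s t : V → ℂ} (hs : Integrable s) (ht : Integrable t)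
    (z : V) : pairFT L (fun v => s v - t v) z = pairFT L s z - pairFT L t z := by
  unfold pairFT VectorFourier.fourierIntegral
  rw [← integral_sub]
  · simp only [smul_sub]
  · exact (VectorFourier.fourierIntegral_convergent_iff Real.continuous_fourierChar
      (L := L.toLinearMap₁₂) (continuous_pairing L) z).2 hs
  · exact (VectorFourier.fourierIntegral_convergent_iff Real.continuous_fourierChar
      (L := L.toLinearMap₁₂) (continuous_pairing L) z).2 ht

variable [FiniteDimensional ℝ V] [(volume : Measure V).IsAddHaarMeasure]

/-- Carrying out the momentum integral in a quantization and substituting `y = x + 2πh z`, whose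
Jacobian cancels the prefactor, gives a superposition of translates of `v` weighted by the
Fourier transform of the symbol. -/
lemma quantization_eq (L : V →L[ℝ] V →L[ℝ] ℝ) (hLs : ∀ v w, L v w = L w v)
    {h : ℝ} (hh : 0 < h) {s v : V → ℂ} (hs : Integrable s) (hv : Integrable v) (x : V) :
    (((2 * π * h) ^ Module.finrank ℝ V : ℝ) : ℂ)⁻¹ *
      ∫ q : V × V, Complex.exp (Complex.I * Complex.ofReal (L (x - q.1) q.2 / h)) * s q.2 * v q.1
      = ∫ z, pairFT L s z * v (x + (2 * π * h) • z) := by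
  have hH : 0 < 2 * π * h := by positivity
  have hint : Integrable (fun q : V × V =>
      Complex.exp (Complex.I * Complex.ofReal (L (x - q.1) q.2 / h)) * s q.2 * v q.1)
      (volume.prod volume) := by
    have h1 : Integrable (fun q : V × V => v q.1 * s q.2) (volume.prod volume) := hv.mul_prod hs
    have h2 : Continuous fun q : V × V =>
        Complex.exp (Complex.I * Complex.ofReal (L (x - q.1) q.2 / h)) := by fun_prop
    refine (h1.bdd_mul (c := 1) h2.aestronglyMeasurable ?_).congr ?_
    · exact Filter.Eventually.of_forall fun q => (norm_exp_I_mul_ofReal' _).le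
    · exact Filter.Eventually.of_forall fun q => by ring
  rw [Measure.volume_eq_prod, integral_prod _ hint]
  have key : ∀ z : V, (∫ ξ, Complex.exp (Complex.I *
      Complex.ofReal (L (x - (x + (2 * π * h) • z)) ξ / h)) * s ξ * v (x + (2 * π * h) • z))
      = pairFT L s z * v (x + (2 * π * h) • z) := by
    intro z
    rw [pairFT_eq, ← integral_mul_const]
    refine integral_congr_ae (Filter.Eventually.of_forall fun ξ => ?_)
    have : L (x - (x + (2 * π * h) • z)) ξ / h = -(2 * π * L ξ z) := by
      rw [hLs ξ z]
      simp
      field_simp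
    simp only [this]
  simp_rw [← key]
  set F : V → ℂ := fun y => ∫ ξ, Complex.exp (Complex.I *
      Complex.ofReal (L (x - y) ξ / h)) * s ξ * v y with hF
  have h1 : ∫ z, F (x + (2 * π * h) • z) =
      ((2 * π * h) ^ Module.finrank ℝ V)⁻¹ • ∫ y, F (x + y) :=
    Measure.integral_comp_smul_of_nonneg volume (fun y => F (x + y)) _ (hR := hH.le)
  rw [integral_add_left_eq_self F x] at h1
  change _ = ∫ z, F (x + (2 * π * h) • z)
  rw [h1, Complex.real_smul, Complex.ofReal_inv]

/-- Rapid decay of the Fourier transform. The constant depends only on the order of decay and the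
size of the support, and enters linearly in the bound `M` on the derivatives, so the estimate can
be applied uniformly to families and to differences of symbols. -/
lemma pairFT_decay (L : V →L[ℝ] V →L[ℝ] ℝ) (hL : ∀ w, ‖w‖ ^ 2 ≤ L w w) (N : ℕ) (R : ℝ) :
    ∃ C : ℝ, 0 ≤ C ∧ ∀ (f : V → ℂ) (M : ℝ), ContDiff ℝ (⊤ : ℕ∞) f →
      (∀ k ≤ N, ∀ v, ‖iteratedFDeriv ℝ k f v‖ ≤ M) → (∀ v, R < ‖v‖ → f v = 0) →
      ∀ w, ‖pairFT L f w‖ ≤ C * M * (1 + ‖w‖) ^ (-(N : ℝ)) := by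
  set vol : ℝ := (volume : Measure V).real (Metric.closedBall 0 R) with hvol
  have hvol0 : 0 ≤ vol := measureReal_nonneg
  refine ⟨2 ^ N * (2 ^ N * ((N + 1) * vol) + 2 ^ 0 * ((N + 1) * vol)), by positivity,
    fun f M hf hM hR w => ?_⟩
  have hM0 : 0 ≤ M := (norm_nonneg _).trans (hM 0 (Nat.zero_le _) 0)
  have hsuppf : tsupport f ⊆ Metric.closedBall 0 R := by
    refine closure_minimal (fun v hv => ?_) Metric.isClosed_closedBall
    by_contra hc
    exact hv (hR v (by simpa using hc))
  have hcs : HasCompactSupport f := HasCompactSupport.of_support_subset_isCompact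
    (isCompact_closedBall 0 R) ((subset_tsupport f).trans hsuppf)
  have hder0 : ∀ k v, v ∉ Metric.closedBall (0 : V) R → iteratedFDeriv ℝ k f v = 0 := by
    intro k v hv
    by_contra hc
    exact hv (hsuppf (support_iteratedFDeriv_subset k hc))
  have hint : ∀ k n : ℕ, (k : ℕ∞) ≤ (⊤ : ℕ∞) → (n : ℕ∞) ≤ (⊤ : ℕ∞) →
      Integrable (fun v ↦ ‖v‖ ^ k * ‖iteratedFDeriv ℝ n f v‖) (volume : Measure V) := by
    intro k n _ _
    have hc : Continuous (iteratedFDeriv ℝ n f) := hf.continuous_iteratedFDeriv (by exact_mod_cast le_top)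
    refine Continuous.integrable_of_hasCompactSupport (by fun_prop) ?_
    exact (hcs.iteratedFDeriv n).norm.mul_left
  have hI : ∀ n ≤ N, ∫ v, ‖iteratedFDeriv ℝ n f v‖ ≤ M * vol := by
    intro n hn
    rw [← setIntegral_eq_integral_of_forall_compl_eq_zero (s := Metric.closedBall (0 : V) R)
      (fun v hv => by rw [hder0 n v hv, norm_zero])]
    refine (le_abs_self _).trans ?_
    rw [← Real.norm_eq_abs]
    exact norm_setIntegral_le_of_norm_le_const measure_closedBall_lt_top
      (fun v _ => by rw [norm_norm]; exact hM n hn v)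
  have hpow : ∀ n ≤ N, ‖w‖ ^ n * ‖pairFT L f w‖ ≤ 2 ^ n * ((N + 1) * vol) * M := by
    intro n hn
    have h0 := VectorFourier.pow_mul_norm_iteratedFDeriv_fourierIntegral_le (μ := volume) L
      (K := ⊤) (N := ⊤) hf hint (k := 0) (n := n) le_top le_top w w
    simp only [norm_iteratedFDeriv_zero, pow_zero, mul_one, zero_add, Finset.range_one,
      Finset.singleton_product, Finset.sum_map, Nat.cast_zero, mul_zero] at h0
    simp at h0
    change |L w w| ^ n * ‖pairFT L f w‖ ≤ _ at h0
    have hsum : ∑ x ∈ Finset.range (n + 1), ∫ v, ‖iteratedFDeriv ℝ x f v‖ ≤ (N + 1) * vol * M := by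
      calc _ ≤ ∑ x ∈ Finset.range (n + 1), M * vol :=
            Finset.sum_le_sum fun x hx => hI x (by simp at hx; omega)
        _ = (n + 1) * (vol * M) := by
            simp only [Finset.sum_const, Finset.card_range, nsmul_eq_mul]
            push_cast
            ring
        _ ≤ (N + 1) * (vol * M) := by
            have : (n : ℝ) ≤ N := by exact_mod_cast hn
            gcongr
        _ = _ := by ring
    rcases eq_or_ne w 0 with rfl | hw
    · rcases Nat.eq_zero_or_pos n with rfl | hn0
      · simp at h0 hsum ⊢
        linarith
      · simp [hn0.ne']
        positivity
    · have hw0 : 0 < ‖w‖ ^ n := by positivity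
      have h1 : (‖w‖ ^ 2) ^ n ≤ |L w w| ^ n := by
        gcongr
        exact (hL w).trans (le_abs_self _)
      have h2 : ‖w‖ ^ n * (‖w‖ ^ n * ‖pairFT L f w‖) ≤ ‖w‖ ^ n * (2 ^ n * ((N + 1) * vol) * M) := by
        calc _ = (‖w‖ ^ 2) ^ n * ‖pairFT L f w‖ := by ring
          _ ≤ |L w w| ^ n * ‖pairFT L f w‖ := by gcongr
          _ ≤ _ := h0
          _ ≤ ‖w‖ ^ n * 2 ^ n * ((N + 1) * vol * M) := by gcongr
          _ = _ := by ring
      exact le_of_mul_le_mul_left h2 hw0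
  have hA := hpow N le_rfl
  have hB := hpow 0 (Nat.zero_le _)
  rw [Real.rpow_neg (by positivity), Real.rpow_natCast, ← div_eq_mul_inv, le_div_iff₀ (by positivity)]
  have h3 : (1 + ‖w‖) ^ N ≤ 2 ^ N * (‖w‖ ^ N + 1) := by
    rcases le_total ‖w‖ 1 with hle | hle
    · calc (1 + ‖w‖) ^ N ≤ 2 ^ N := by gcongr; linarith
        _ ≤ 2 ^ N * (‖w‖ ^ N + 1) := le_mul_of_one_le_right (by positivity)
            (by linarith [pow_nonneg (norm_nonneg w) N])
    · calc (1 + ‖w‖) ^ N ≤ (2 * ‖w‖) ^ N := by gcongr; linarith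
        _ = 2 ^ N * ‖w‖ ^ N := by rw [mul_pow]
        _ ≤ _ := by gcongr; linarith
  calc ‖pairFT L f w‖ * (1 + ‖w‖) ^ N ≤ ‖pairFT L f w‖ * (2 ^ N * (‖w‖ ^ N + 1)) := by gcongr
    _ = 2 ^ N * (‖w‖ ^ N * ‖pairFT L f w‖ + ‖w‖ ^ 0 * ‖pairFT L f w‖) := by ring
    _ ≤ 2 ^ N * (2 ^ N * ((N + 1) * vol) * M + 2 ^ 0 * ((N + 1) * vol) * M) := by gcongr
    _ = _ := by ring

/-- A superposition of translations with weight `Φ` has `L²` operator norm at most `∫ Φ`: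
Cauchy–Schwarz for the measure `Φ μ`, then Tonelli and translation invariance. -/
lemma lintegral_weighted_translates {X : Type*} [MeasurableSpace X] (μ : Measure X) [SFinite μ]
    {Φ : X → ENNReal} (hΦ : Measurable Φ) {τ : X → V} (hτ : Measurable τ)
    {U : V → ENNReal} (hU : Measurable U) :
    ∫⁻ p, (∫⁻ x, Φ x * U (p + τ x) ∂μ) ^ 2 ≤ (∫⁻ x, Φ x ∂μ) ^ 2 * ∫⁻ p, U p ^ 2 := by
  have hCS : ∀ p, (∫⁻ x, Φ x * U (p + τ x) ∂μ) ^ 2 ≤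
      (∫⁻ x, Φ x ∂μ) * ∫⁻ x, Φ x * U (p + τ x) ^ 2 ∂μ := by
    intro p
    have hm : Measurable fun x => U (p + τ x) := by fun_prop
    have h0 := ENNReal.lintegral_mul_le_Lp_mul_Lq (μ.withDensity Φ) Real.HolderConjugate.two_two
      (f := fun _ => 1) (g := fun x => U (p + τ x)) aemeasurable_const hm.aemeasurable
    simp only [Pi.mul_apply, one_mul, ENNReal.one_rpow, lintegral_one, withDensity_apply _ MeasurableSet.univ,
      Measure.restrict_univ] at h0
    rw [lintegral_withDensity_eq_lintegral_mul _ hΦ hm,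
      lintegral_withDensity_eq_lintegral_mul _ hΦ (hm.pow_const _)] at h0
    have h1 := pow_le_pow_left' h0 2
    simp only [Pi.mul_apply, mul_pow] at h1
    refine h1.trans (le_of_eq ?_)
    have e : ∀ t : ENNReal, (t ^ (1 / 2 : ℝ)) ^ 2 = t := fun t => by
      rw [← ENNReal.rpow_natCast, ← ENNReal.rpow_mul]; norm_num
    rw [e, e]
    simp
  calc _ ≤ ∫⁻ p, (∫⁻ x, Φ x ∂μ) * ∫⁻ x, Φ x * U (p + τ x) ^ 2 ∂μ := lintegral_mono hCS
    _ = (∫⁻ x, Φ x ∂μ) * ∫⁻ p, ∫⁻ x, Φ x * U (p + τ x) ^ 2 ∂μ := by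
        refine lintegral_const_mul _ (Measurable.lintegral_prod_right' (f := fun q : V × X => Φ q.2 * U (q.1 + τ q.2) ^ 2) (by fun_prop))
    _ = (∫⁻ x, Φ x ∂μ) * ∫⁻ x, (∫⁻ p, Φ x * U (p + τ x) ^ 2) ∂μ := by
        rw [lintegral_lintegral_swap]
        exact Measurable.aemeasurable (by fun_prop)
    _ = (∫⁻ x, Φ x ∂μ) * ∫⁻ x, Φ x * (∫⁻ p, U p ^ 2) ∂μ := by
        congr 1
        refine lintegral_congr fun x => ?_
        rw [lintegral_const_mul _ (by fun_prop), lintegral_add_right_eq_self (fun p => U p ^ 2)]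
    _ = _ := by rw [lintegral_mul_const _ hΦ]; ring

end General


/-! ### The pairing on `ℝ × ℝⁿ` and products of symbols -/

section Product

variable {n : ℕ}

local notation "𝔼" => EuclideanSpace ℝ (Fin n)

instance isAddHaarMeasure_volume_real_prod :
    (volume : Measure (ℝ × 𝔼)).IsAddHaarMeasure := by
  rw [Measure.volume_eq_prod]
  infer_instance

/-- The Euclidean pairing `(y, x) · (η, ξ) = y η + ⟪x, ξ⟫` on `ℝ × ℝⁿ`. -/
noncomputable def prodPairing (n : ℕ) :
    (ℝ × EuclideanSpace ℝ (Fin n)) →L[ℝ] (ℝ × EuclideanSpace ℝ (Fin n)) →L[ℝ] ℝ :=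
  (ContinuousLinearMap.mul ℝ ℝ).bilinearComp (ContinuousLinearMap.fst ℝ ℝ _)
      (ContinuousLinearMap.fst ℝ ℝ _) +
    (innerSL ℝ).bilinearComp (ContinuousLinearMap.snd ℝ ℝ _) (ContinuousLinearMap.snd ℝ ℝ _)

lemma prodPairing_apply (p q : ℝ × 𝔼) :
    prodPairing n p q = p.1 * q.1 + ⟪p.2, q.2⟫ := by
  simp [prodPairing]

lemma prodPairing_symm (p q : ℝ × 𝔼) : prodPairing n p q = prodPairing n q p := by
  rw [prodPairing_apply, prodPairing_apply, real_inner_comm, mul_comm]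

lemma prodPairing_self (p : ℝ × 𝔼) : ‖p‖ ^ 2 ≤ prodPairing n p p := by
  rw [prodPairing_apply, real_inner_self_eq_norm_sq]
  rcases le_total ‖p.1‖ ‖p.2‖ with h | h
  · have : ‖p‖ = ‖p.2‖ := by rw [Prod.norm_def, max_eq_right h]
    rw [this]; nlinarith [mul_self_nonneg p.1]
  · have : ‖p‖ = ‖p.1‖ := by rw [Prod.norm_def, max_eq_left h]
    rw [this, Real.norm_eq_abs, sq_abs]; nlinarith [sq_nonneg ‖p.2‖]

lemma pairFT_inner_inversion {β : 𝔼 → ℂ} (hβc : Continuous β) (hβ : Integrable β)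
    (hβ' : Integrable (pairFT (innerSL ℝ) β)) (ξ : 𝔼) :
    ∫ w, Complex.exp (Complex.I * ((2 * π * ⟪ξ, w⟫ : ℝ) : ℂ)) * pairFT (innerSL ℝ) β w = β ξ := by
  have hF : pairFT (innerSL ℝ) β = 𝓕 β := rfl
  rw [hF] at hβ' ⊢
  have h0 := congrFun (hβc.fourierInv_fourier_eq hβ hβ') ξ
  rw [Real.fourierInv_eq'] at h0
  rw [← h0]
  refine integral_congr_ae (Filter.Eventually.of_forall fun w => ?_)
  simp only [smul_eq_mul]
  rw [real_inner_comm]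
  congr 2
  push_cast
  ring

/-- The transform of `s(η, ξ) β(ξ)` is a convolution in the tangential variable only, by Fourier
inversion for `β`. -/
lemma pairFT_mul {s : ℝ × 𝔼 → ℂ} (hs : Integrable s) {β : 𝔼 → ℂ}
    (hβc : Continuous β) (hβ : Integrable β) (hβ' : Integrable (pairFT (innerSL ℝ) β))
    (z : ℝ × 𝔼) :
    pairFT (prodPairing n) (fun ζ => s ζ * β ζ.2) z =
      ∫ w, pairFT (innerSL ℝ) β w * pairFT (prodPairing n) s (z - (0, w)) := by
  have h1 : ∀ w : 𝔼, pairFT (innerSL ℝ) β w * pairFT (prodPairing n) s (z - (0, w)) =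
      ∫ ζ : ℝ × 𝔼, Complex.exp (Complex.I * ((-(2 * π * prodPairing n ζ z) : ℝ) : ℂ)) * s ζ *
        (Complex.exp (Complex.I * ((2 * π * ⟪ζ.2, w⟫ : ℝ) : ℂ)) * pairFT (innerSL ℝ) β w) := by
    intro w
    rw [pairFT_eq (prodPairing n), ← integral_const_mul]
    refine integral_congr_ae (Filter.Eventually.of_forall fun ζ => ?_)
    have he : Complex.exp (Complex.I * ((-(2 * π * prodPairing n ζ (z - (0, w))) : ℝ) : ℂ)) =
        Complex.exp (Complex.I * ((-(2 * π * prodPairing n ζ z) : ℝ) : ℂ)) *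
          Complex.exp (Complex.I * ((2 * π * ⟪ζ.2, w⟫ : ℝ) : ℂ)) := by
      rw [← Complex.exp_add]
      congr 1
      rw [map_sub, prodPairing_apply ζ (0, w)]
      push_cast
      ring
    simp only [he]
    ring
  simp_rw [h1]
  rw [integral_integral_swap, pairFT_eq]
  · refine integral_congr_ae (Filter.Eventually.of_forall fun ζ => ?_)
    simp only [integral_const_mul]
    rw [pairFT_inner_inversion hβc hβ hβ']
    ring
  · have h2 : Integrable (fun q : 𝔼 × (ℝ × 𝔼) => pairFT (innerSL ℝ) β q.1 * s q.2)
        (volume.prod volume) := hβ'.mul_prod hs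
    have h3 : Continuous fun q : 𝔼 × (ℝ × 𝔼) =>
        Complex.exp (Complex.I * ((-(2 * π * prodPairing n q.2 z) : ℝ) : ℂ)) *
          Complex.exp (Complex.I * ((2 * π * ⟪q.2.2, q.1⟫ : ℝ) : ℂ)) := by fun_prop
    refine (h2.bdd_mul (c := 1) h3.aestronglyMeasurable ?_).congr ?_
    · refine Filter.Eventually.of_forall fun q => ?_
      rw [norm_mul, norm_exp_I_mul_ofReal', norm_exp_I_mul_ofReal', one_mul]
    · exact Filter.Eventually.of_forall fun q => by
        simp only [Function.uncurry]; ring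

/-- With coefficients frozen, the quantization of a product symbol is exactly the composition of
the quantizations. -/
lemma frozen_composition {s : ℝ × 𝔼 → ℂ} (hs : Integrable s)
    (hs' : Integrable (pairFT (prodPairing n) s)) {β : 𝔼 → ℂ}
    (hβc : Continuous β) (hβ : Integrable β) (hβ' : Integrable (pairFT (innerSL ℝ) β))
    {u : ℝ × 𝔼 → ℂ} (hu : Continuous u) {B : ℝ} (hB : ∀ p, ‖u p‖ ≤ B) (p : ℝ × 𝔼) (H : ℝ) :
    ∫ z, pairFT (prodPairing n) (fun ζ => s ζ * β ζ.2) z * u (p + H • z) =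
      ∫ z, pairFT (prodPairing n) s z *
        ∫ w, pairFT (innerSL ℝ) β w * u (p + H • z + (0, H • w)) := by
  have hint : Integrable (fun q : (ℝ × 𝔼) × 𝔼 => pairFT (prodPairing n) s q.1 *
      (pairFT (innerSL ℝ) β q.2 * u (p + H • q.1 + (0, H • q.2)))) (volume.prod volume) := by
    have h2 : Integrable (fun q : (ℝ × 𝔼) × 𝔼 => pairFT (prodPairing n) s q.1 *
      pairFT (innerSL ℝ) β q.2) (volume.prod volume) := hs'.mul_prod hβ'
    have h3 : Continuous fun q : (ℝ × 𝔼) × 𝔼 => u (p + H • q.1 + (0, H • q.2)) := by fun_prop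
    refine (h2.bdd_mul (c := B) h3.aestronglyMeasurable
      (Filter.Eventually.of_forall fun q => hB _)).congr ?_
    exact Filter.Eventually.of_forall fun q => by ring
  have hint2 : Integrable (fun q : (ℝ × 𝔼) × 𝔼 => pairFT (prodPairing n) s (q.1 - (0, q.2)) *
      (pairFT (innerSL ℝ) β q.2 * u (p + H • q.1))) (volume.prod volume) := by
    -- the shear `(z, w) ↦ (z - (0, w), w)` preserves measure and carries `hint` to the claim
    have hmp : MeasurePreserving (fun q : (ℝ × 𝔼) × 𝔼 => (q.1 - ((0, q.2) : ℝ × 𝔼), q.2))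
        (volume.prod volume) (volume.prod volume) := by
      have hm : Measurable (fun q : 𝔼 × (ℝ × 𝔼) => q.2 - ((0, q.1) : ℝ × 𝔼)) := by fun_prop
      have h5 := (MeasurePreserving.id (volume : Measure 𝔼)).skew_product
        (g := fun w (z : ℝ × 𝔼) => z - ((0, w) : ℝ × 𝔼)) (μc := volume) (μd := volume)
        hm (Filter.Eventually.of_forall fun w =>
          (measurePreserving_sub_right volume ((0, w) : ℝ × 𝔼)).map_eq)
      exact (Measure.measurePreserving_swap.comp h5).comp Measure.measurePreserving_swap
    have h6 := hmp.integrable_comp_of_integrable hint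
    refine h6.congr (Filter.Eventually.of_forall fun q => ?_)
    have : p + H • (q.1 - ((0, q.2) : ℝ × 𝔼)) + (0, H • q.2) = p + H • q.1 := by
      have e : H • ((0, q.2) : ℝ × 𝔼) = (0, H • q.2) := by simp
      rw [smul_sub, e]
      abel
    simp only [Function.comp, this]
  calc _ = ∫ z, ∫ w, pairFT (prodPairing n) s (z - (0, w)) *
      (pairFT (innerSL ℝ) β w * u (p + H • z)) := by
        refine integral_congr_ae (Filter.Eventually.of_forall fun z => ?_)
        simp only
        rw [pairFT_mul hs hβc hβ hβ', ← integral_mul_const]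
        refine integral_congr_ae (Filter.Eventually.of_forall fun w => ?_)
        simp only
        ring
    _ = ∫ w, ∫ z, pairFT (prodPairing n) s (z - (0, w)) *
      (pairFT (innerSL ℝ) β w * u (p + H • z)) := integral_integral_swap hint2
    _ = ∫ w, ∫ z, pairFT (prodPairing n) s z *
      (pairFT (innerSL ℝ) β w * u (p + H • z + (0, H • w))) := by
        refine integral_congr_ae (Filter.Eventually.of_forall fun w => ?_)
        simp only
        rw [← integral_add_right_eq_self _ ((0, w) : ℝ × 𝔼)]
        refine integral_congr_ae (Filter.Eventually.of_forall fun z => ?_)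
        have : p + H • (z + ((0, w) : ℝ × 𝔼)) = p + H • z + (0, H • w) := by
          ext <;> simp [add_assoc]
        simp only [this, add_sub_cancel_right]
    _ = ∫ z, ∫ w, pairFT (prodPairing n) s z *
      (pairFT (innerSL ℝ) β w * u (p + H • z + (0, H • w))) :=
        (integral_integral_swap hint).symm
    _ = _ := by simp_rw [integral_const_mul]

end Product


/-! ### Symbols depending on a base point -/

section Slices

lemma integrable_of_continuous_of_eq_zero {V : Type*} [NormedAddCommGroup V] [NormedSpace ℝ V]
    [FiniteDimensional ℝ V] [MeasureSpace V] [BorelSpace V]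
    [(volume : Measure V).IsAddHaarMeasure] {f : V → ℂ} (hf : Continuous f) {R : ℝ}
    (hR : ∀ v, R < ‖v‖ → f v = 0) : Integrable f := by
  refine hf.integrable_of_hasCompactSupport
    (HasCompactSupport.of_support_subset_isCompact (isCompact_closedBall 0 R) fun v hv => ?_)
  by_contra hc
  exact hv (hR v (by simpa using hc))

variable {X W : Type*} [NormedAddCommGroup X] [NormedSpace ℝ X]
  [NormedAddCommGroup W] [NormedSpace ℝ W]

/-- Derivatives in the second variable are restrictions of the full derivatives, which bounds all
slices uniformly. -/
lemma iteratedFDeriv_slice {F : X × W → ℂ} (hF : ContDiff ℝ (⊤ : ℕ∞) F) (k : ℕ) (p : X) (ξ : W) :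
    iteratedFDeriv ℝ k (fun ξ => F (p, ξ)) ξ =
      (iteratedFDeriv ℝ k F (p, ξ)).compContinuousLinearMap
        (fun _ => ContinuousLinearMap.inr ℝ X W) := by
  have h1 : (fun ξ => F (p, ξ)) =
      (fun q => F (((p, 0) : X × W) + q)) ∘ (ContinuousLinearMap.inr ℝ X W) := by
    ext ξ; simp
  have hG : ContDiff ℝ (⊤ : ℕ∞) (fun q => F (((p, 0) : X × W) + q)) := by fun_prop
  rw [h1, ContinuousLinearMap.iteratedFDeriv_comp_right _ hG ξ (i := k) (by exact_mod_cast le_top),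
    iteratedFDeriv_comp_add_left]
  simp

lemma norm_compInr_le {k : ℕ} (T : ContinuousMultilinearMap ℝ (fun _ : Fin k => X × W) ℂ) :
    ‖T.compContinuousLinearMap (fun _ => ContinuousLinearMap.inr ℝ X W)‖ ≤ ‖T‖ := by
  refine (ContinuousMultilinearMap.norm_compContinuousLinearMap_le _ _).trans ?_
  refine mul_le_of_le_one_right (norm_nonneg _) (Finset.prod_le_one (fun _ _ => norm_nonneg _) ?_)
  intro _ _
  exact ContinuousLinearMap.norm_inr_le_one ℝ X W

variable [FiniteDimensional ℝ W] [MeasureSpace W] [BorelSpace W]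
  [(volume : Measure W).IsAddHaarMeasure]

/-- The partial Fourier transform of a symbol with bounded derivatives and support bounded in
momentum decays rapidly, uniformly in the base point, and so does its Lipschitz constant with
respect to the base point. -/
lemma pairFT_slice_decay (L : W →L[ℝ] W →L[ℝ] ℝ) (hL : ∀ w, ‖w‖ ^ 2 ≤ L w w)
    {F : X × W → ℂ} (hF : ContDiff ℝ (⊤ : ℕ∞) F)
    (hM : ∀ m : ℕ, ∃ M : ℝ, ∀ q, ‖iteratedFDeriv ℝ m F q‖ ≤ M)
    {R : ℝ} (hR : ∀ p ξ, R < ‖ξ‖ → F (p, ξ) = 0) (N : ℕ) :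
    ∃ C : ℝ, 0 ≤ C ∧
      (∀ p w, ‖pairFT L (fun ξ => F (p, ξ)) w‖ ≤ C * (1 + ‖w‖) ^ (-(N : ℝ))) ∧
      (∀ p p' w, ‖pairFT L (fun ξ => F (p', ξ)) w - pairFT L (fun ξ => F (p, ξ)) w‖ ≤
        ‖p' - p‖ * (C * (1 + ‖w‖) ^ (-(N : ℝ)))) := by
  choose M hM using hM
  have hM0 : ∀ m, 0 ≤ M m := fun m => (norm_nonneg _).trans (hM m 0)
  set S : ℝ := ∑ k ∈ Finset.range (N + 2), M k with hS
  have hMS : ∀ k < N + 2, M k ≤ S := fun k hk =>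
    Finset.single_le_sum (f := M) (fun i _ => hM0 i) (Finset.mem_range.2 hk)
  have hS0 : 0 ≤ S := Finset.sum_nonneg fun i _ => hM0 i
  obtain ⟨C, hC0, hC⟩ := pairFT_decay L hL N R
  have hslice : ∀ p, ContDiff ℝ (⊤ : ℕ∞) (fun ξ => F (p, ξ)) := fun p => by fun_prop
  have hint : ∀ p, Integrable (fun ξ => F (p, ξ)) := fun p =>
    integrable_of_continuous_of_eq_zero (hslice p).continuous (hR p)
  refine ⟨C * S, by positivity, fun p w => ?_, fun p p' w => ?_⟩
  · refine hC _ S (hslice p) (fun k hk v => ?_) (hR p) w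
    rw [iteratedFDeriv_slice hF]
    exact (norm_compInr_le _).trans ((hM k _).trans (hMS k (by omega)))
  · rw [← pairFT_sub L (hint p') (hint p)]
    have h1 := hC (fun ξ => F (p', ξ) - F (p, ξ)) (S * ‖p' - p‖) ((hslice p').sub (hslice p))
      (fun k hk v => ?_) (fun v hv => by rw [hR _ _ hv, hR _ _ hv, sub_zero]) w
    · refine h1.trans (le_of_eq ?_)
      ring
    have hsub : iteratedFDeriv ℝ k (fun ξ => F (p', ξ) - F (p, ξ)) v =
        (iteratedFDeriv ℝ k F (p', v) - iteratedFDeriv ℝ k F (p, v)).compContinuousLinearMap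
          (fun _ => ContinuousLinearMap.inr ℝ X W) := by
      have h2 := iteratedFDeriv_sub (𝕜 := ℝ) (i := k)
        ((hslice p').of_le (by exact_mod_cast le_top)) ((hslice p).of_le (by exact_mod_cast le_top))
      have h3 := congrFun h2 v
      simp only [Pi.sub_apply, iteratedFDeriv_slice hF] at h3
      refine Eq.trans h3 ?_
      ext; simp
    rw [hsub]
    refine (norm_compInr_le _).trans ?_
    have hd : Differentiable ℝ (iteratedFDeriv ℝ k F) :=
      hF.differentiable_iteratedFDeriv (by exact_mod_cast WithTop.coe_lt_top k)
    have h4 := Convex.norm_image_sub_le_of_norm_fderiv_le (𝕜 := ℝ) (C := S)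
      (f := iteratedFDeriv ℝ k F) (s := Set.univ) (x := (p, v)) (y := (p', v))
      (fun x _ => hd x) (fun x _ => by
        rw [norm_fderiv_iteratedFDeriv]; exact (hM _ _).trans (hMS _ (by omega)))
      convex_univ (Set.mem_univ _) (Set.mem_univ _)
    refine h4.trans (le_of_eq ?_)
    simp [Prod.norm_def]

lemma integrable_pairFT_of_decay {L : W →L[ℝ] W →L[ℝ] ℝ} {s : W → ℂ} (hs : Integrable s)
    {C : ℝ} {N : ℕ} (hN : Module.finrank ℝ W < N)
    (h : ∀ w, ‖pairFT L s w‖ ≤ C * (1 + ‖w‖) ^ (-(N : ℝ))) : Integrable (pairFT L s) :=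
  ((integrable_one_add_norm (by exact_mod_cast hN)).const_mul C).mono'
    (pairFT_continuous L hs).aestronglyMeasurable (Filter.Eventually.of_forall h)

end Slices

lemma eLpNorm_two_sq {α : Type*} [MeasurableSpace α] (μ : Measure α) (f : α → ℂ) :
    eLpNorm f 2 μ ^ 2 = ∫⁻ x, ‖f x‖ₑ ^ 2 ∂μ := by
  rw [eLpNorm_eq_lintegral_rpow_enorm_toReal (by norm_num) (by norm_num), ← ENNReal.rpow_natCast,
    ← ENNReal.rpow_mul]
  simp


/-! ### The three quantizations as superpositions of translations -/

section Operators

variable {d : ℕ}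

local notation "𝔼" => EuclideanSpace ℝ (Fin (d - 1))

lemma opTangential_eq {h : ℝ} (hh : 0 < h) {b : ℝ → 𝔼 → 𝔼 → ℂ} {u : ℝ × 𝔼 → ℂ} (p : ℝ × 𝔼)
    (hb : Integrable (b p.1 p.2)) (hu : Integrable fun x => u (p.1, x)) :
    opTangential d h b u p =
      ∫ w, pairFT (innerSL ℝ) (b p.1 p.2) w * u (p + (0, (2 * π * h) • w)) := by
  have h1 := quantization_eq (innerSL ℝ) (fun v w => by rw [innerSL_apply_apply, innerSL_apply_apply, real_inner_comm]) hh hb hu p.2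
  rw [finrank_euclideanSpace_fin] at h1
  have hp : ∀ w : 𝔼, p + (0, (2 * π * h) • w) = (p.1, p.2 + (2 * π * h) • w) := fun w => by
    ext <;> simp
  simp_rw [hp]
  exact h1

lemma opInterior_eq (hd : 2 ≤ d) {h : ℝ} (hh : 0 < h) {a : ℝ → 𝔼 → ℝ → 𝔼 → ℂ} {v : ℝ × 𝔼 → ℂ}
    (p : ℝ × 𝔼) (ha : Integrable fun ζ : ℝ × 𝔼 => a p.1 p.2 ζ.1 ζ.2) (hv : Integrable v) :
    opInterior d h a v p =
      ∫ z, pairFT (prodPairing (d - 1)) (fun ζ => a p.1 p.2 ζ.1 ζ.2) z *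
        v (p + (2 * π * h) • z) := by
  have h1 := quantization_eq (prodPairing (d - 1)) prodPairing_symm hh ha hv p
  have hf : Module.finrank ℝ (ℝ × 𝔼) = d := by
    rw [Module.finrank_prod, Module.finrank_self, finrank_euclideanSpace_fin]; omega
  rw [hf] at h1
  rw [← h1]
  unfold opInterior
  simp only [prodPairing_apply]
  rfl

lemma opProduct_eq (hd : 2 ≤ d) {h : ℝ} (hh : 0 < h) {a : ℝ → 𝔼 → ℝ → 𝔼 → ℂ}
    {b : ℝ → 𝔼 → 𝔼 → ℂ} {u : ℝ × 𝔼 → ℂ} (p : ℝ × 𝔼)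
    (hab : Integrable fun ζ : ℝ × 𝔼 => a p.1 p.2 ζ.1 ζ.2 * b p.1 p.2 ζ.2) (hu : Integrable u) :
    opProduct d h a b u p =
      ∫ z, pairFT (prodPairing (d - 1)) (fun ζ => a p.1 p.2 ζ.1 ζ.2 * b p.1 p.2 ζ.2) z *
        u (p + (2 * π * h) • z) :=
  opInterior_eq (a := fun y x η ξ => a y x η ξ * b y x ξ) hd hh p hab hu

/-- When bounded, `B_h u` is integrable, being measurable and compactly supported: `u` confines the
normal variable and `b` the tangential one. -/
lemma integrable_opTangential {h : ℝ} {b : ℝ → 𝔼 → 𝔼 → ℂ}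
    (hb : Continuous fun q : (ℝ × 𝔼) × 𝔼 => b q.1.1 q.1.2 q.2) {u : ℝ × 𝔼 → ℂ}
    (hu : Continuous u) {Ru Rb B : ℝ} (hRu : ∀ p, Ru < ‖p‖ → u p = 0)
    (hRb : ∀ y x ξ, Rb < ‖x‖ → b y x ξ = 0)
    (hB : ∀ p, ‖opTangential d h b u p‖ ≤ B) : Integrable (opTangential d h b u) := by
  have hmeas : StronglyMeasurable (opTangential d h b u) := by
    unfold opTangential
    refine StronglyMeasurable.const_mul (StronglyMeasurable.integral_prod_right
      (f := fun (p : ℝ × 𝔼) (q : 𝔼 × 𝔼) =>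
        Complex.exp (Complex.I * Complex.ofReal (⟪p.2 - q.1, q.2⟫ / h)) *
        b p.1 p.2 q.2 * u (p.1, q.1)) (Continuous.stronglyMeasurable ?_)) _
    have h1 : Continuous fun r : (ℝ × 𝔼) × (𝔼 × 𝔼) => b r.1.1 r.1.2 r.2.2 :=
      hb.comp (f := fun r : (ℝ × 𝔼) × (𝔼 × 𝔼) => (r.1, r.2.2)) (by fun_prop)
    have h2 : Continuous fun r : (ℝ × 𝔼) × (𝔼 × 𝔼) => ⟪r.1.2 - r.2.1, r.2.2⟫ :=
      Continuous.inner (by fun_prop) (by fun_prop)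
    have h3 : Continuous fun r : (ℝ × 𝔼) × (𝔼 × 𝔼) => u (r.1.1, r.2.1) :=
      hu.comp (f := fun r : (ℝ × 𝔼) × (𝔼 × 𝔼) => (r.1.1, r.2.1)) (by fun_prop)
    exact ((Complex.continuous_exp.comp (continuous_const.mul
      (Complex.continuous_ofReal.comp (h2.div_const h)))).mul h1).mul h3
  have hzero : ∀ p, p ∉ Metric.closedBall (0 : ℝ × 𝔼) (max Ru Rb) → opTangential d h b u p = 0 := by
    intro p hp
    have hp' : max Ru Rb < ‖p‖ := by simpa using hp
    rw [Prod.norm_def, lt_max_iff] at hp'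
    have : ∀ q : 𝔼 × 𝔼, Complex.exp (Complex.I * Complex.ofReal (⟪p.2 - q.1, q.2⟫ / h)) *
        b p.1 p.2 q.2 * u (p.1, q.1) = 0 := by
      intro q
      rcases hp' with h1 | h1
      · rw [hRu (p.1, q.1) ((le_max_left _ _).trans_lt (h1.trans_le (le_max_left _ _))), mul_zero]
      · rw [hRb _ _ _ ((le_max_right _ _).trans_lt h1), mul_zero, zero_mul]
    unfold opTangential
    simp only [this, integral_zero, mul_zero]
  refine (integrableOn_iff_integrable_of_support_subset (s := Metric.closedBall 0 (max Ru Rb))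
    fun p hp => ?_).1 ?_
  · by_contra hc
    exact hp (hzero p hc)
  · exact Measure.integrableOn_of_bounded measure_closedBall_lt_top.ne
      hmeas.aestronglyMeasurable (M := B) (Filter.Eventually.of_forall hB)

/-- The Fourier transform `â_p` of the interior symbol in `(η, ξ)` at the base point `p`. -/
noncomputable def interiorFT (a : ℝ → 𝔼 → ℝ → 𝔼 → ℂ) (p z : ℝ × 𝔼) : ℂ :=
  pairFT (prodPairing (d - 1)) (fun ζ => a p.1 p.2 ζ.1 ζ.2) z

/-- The Fourier transform `b̂_p` of the tangential symbol in `ξ` at the base point `p`. -/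
noncomputable def tangentialFT (b : ℝ → 𝔼 → 𝔼 → ℂ) (p : ℝ × 𝔼) (w : 𝔼) : ℂ :=
  pairFT (innerSL ℝ) (b p.1 p.2) w

/-- The tangential operator with coefficients frozen at `p`, applied to `u` and evaluated at `p'`:
`∫ b̂_p(w) u(p' + (0, 2πh w)) dw`. On the diagonal `p' = p` it is `B_h u (p)`. -/
noncomputable def frozenOp (h : ℝ) (b : ℝ → 𝔼 → 𝔼 → ℂ) (u : ℝ × 𝔼 → ℂ) (p p' : ℝ × 𝔼) : ℂ :=
  ∫ w, tangentialFT b p w * u (p' + (0, (2 * π * h) • w))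

lemma finrank_real_prod (hd : 2 ≤ d) : Module.finrank ℝ (ℝ × 𝔼) = d := by
  rw [Module.finrank_prod, Module.finrank_self, finrank_euclideanSpace_fin]; omega

lemma integrable_weight (hd : 2 ≤ d) : Integrable fun w : 𝔼 => (1 + ‖w‖) ^ (-(d : ℝ)) :=
  integrable_one_add_norm (by
    rw [finrank_euclideanSpace_fin]; exact_mod_cast (by omega : d - 1 < d))

lemma norm_mul_weight_le (N : ℕ) {t : ℝ} (ht : 0 ≤ t) :
    t * (1 + t) ^ (-((N + 1 : ℕ) : ℝ)) ≤ (1 + t) ^ (-(N : ℝ)) := by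
  have h1 : (1 + t) ^ (-(N : ℝ)) = (1 + t) * (1 + t) ^ (-((N + 1 : ℕ) : ℝ)) := by
    rw [Real.rpow_neg (by positivity), Real.rpow_neg (by positivity), Real.rpow_natCast,
      Real.rpow_natCast, pow_succ]
    field_simp
  rw [h1]
  gcongr
  linarith

lemma enorm_frozenOp_sub_le {h : ℝ} {b : ℝ → 𝔼 → 𝔼 → ℂ} {u : ℝ × 𝔼 → ℂ} (hu : Continuous u)
    {Bu : ℝ} (hBu : ∀ p, ‖u p‖ ≤ Bu) (hb' : ∀ p, Integrable (tangentialFT b p)) {Cb : ℝ}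
    (hCb' : ∀ p p' w, ‖tangentialFT b p' w - tangentialFT b p w‖ ≤
      ‖p' - p‖ * (Cb * (1 + ‖w‖) ^ (-(d : ℝ)))) (p p' : ℝ × 𝔼) :
    ‖frozenOp h b u p' p' - frozenOp h b u p p'‖ₑ ≤
      ∫⁻ w : 𝔼, ENNReal.ofReal (‖p' - p‖ * (Cb * (1 + ‖w‖) ^ (-(d : ℝ)))) *
        ‖u (p' + (0, (2 * π * h) • w))‖ₑ := by
  have hint : ∀ q : ℝ × 𝔼, Integrable fun w : 𝔼 =>
      tangentialFT b q w * u (p' + (0, (2 * π * h) • w)) := fun q =>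
    (hb' q).mul_bdd (c := Bu) (Continuous.aestronglyMeasurable (by fun_prop))
      (Filter.Eventually.of_forall fun w => hBu _)
  unfold frozenOp
  rw [← integral_sub (hint p') (hint p)]
  refine (enorm_integral_le_lintegral_enorm _).trans (lintegral_mono fun w => ?_)
  rw [← sub_mul, enorm_mul]
  gcongr
  rw [← ofReal_norm]
  exact ENNReal.ofReal_le_ofReal (hCb' p p' w)

/-- The error `A_h B_h u - C_h u` is pointwise dominated by `h` times a superposition of translates
of `|u|` with an integrable weight independent of `h`. -/
lemma enorm_difference_le (hd : 2 ≤ d) {a : ℝ → 𝔼 → ℝ → 𝔼 → ℂ} {b : ℝ → 𝔼 → 𝔼 → ℂ}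
    (ha : Continuous fun q : (ℝ × 𝔼) × ℝ × 𝔼 => a q.1.1 q.1.2 q.2.1 q.2.2)
    (hb : Continuous fun q : (ℝ × 𝔼) × 𝔼 => b q.1.1 q.1.2 q.2)
    {Ra Rb : ℝ} (hRa : ∀ (p ζ : ℝ × 𝔼), Ra < ‖ζ‖ → a p.1 p.2 ζ.1 ζ.2 = 0)
    (hRb : ∀ (y : ℝ) (x ξ : 𝔼), Rb < ‖x‖ ∨ Rb < ‖ξ‖ → b y x ξ = 0)
    {Ca Cb : ℝ} (hCa0 : 0 ≤ Ca) (hCb0 : 0 ≤ Cb)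
    (hCa : ∀ p z, ‖interiorFT a p z‖ ≤ Ca * (1 + ‖z‖) ^ (-((d + 2 : ℕ) : ℝ)))
    (hCb : ∀ p w, ‖tangentialFT b p w‖ ≤ Cb * (1 + ‖w‖) ^ (-(d : ℝ)))
    (hCb' : ∀ p p' w, ‖tangentialFT b p' w - tangentialFT b p w‖ ≤
      ‖p' - p‖ * (Cb * (1 + ‖w‖) ^ (-(d : ℝ))))
    {h : ℝ} (hh : 0 < h) {u : ℝ × 𝔼 → ℂ} (hu : Continuous u) (huc : HasCompactSupport u)
    (p : ℝ × 𝔼) :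
    ‖opInterior d h a (opTangential d h b u) p - opProduct d h a b u p‖ₑ ≤
      ENNReal.ofReal h * ∫⁻ q : (ℝ × 𝔼) × 𝔼,
        ENNReal.ofReal (2 * π * ((Ca * (1 + ‖q.1‖) ^ (-((d + 1 : ℕ) : ℝ))) *
          (Cb * (1 + ‖q.2‖) ^ (-(d : ℝ))))) *
        ‖u (p + ((2 * π * h) • q.1 + (0, (2 * π * h) • q.2)))‖ₑ ∂(volume.prod volume) := by
  have hH0 : 0 < 2 * π * h := by positivity
  have ha_int : ∀ p : ℝ × 𝔼, Integrable fun ζ : ℝ × 𝔼 => a p.1 p.2 ζ.1 ζ.2 := fun p =>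
    integrable_of_continuous_of_eq_zero
      (ha.comp (f := fun ζ : ℝ × 𝔼 => (p, ζ)) (by fun_prop)) (hRa p)
  have hb_cont : ∀ p : ℝ × 𝔼, Continuous (b p.1 p.2) := fun p =>
    hb.comp (f := fun ξ : 𝔼 => (p, ξ)) (by fun_prop)
  have hb_int : ∀ p : ℝ × 𝔼, Integrable (b p.1 p.2) := fun p =>
    integrable_of_continuous_of_eq_zero (hb_cont p) (fun ξ hξ => hRb _ _ _ (Or.inr hξ))
  have hab_int : Integrable fun ζ : ℝ × 𝔼 => a p.1 p.2 ζ.1 ζ.2 * b p.1 p.2 ζ.2 :=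
    integrable_of_continuous_of_eq_zero (R := Ra)
      ((ha.comp (f := fun ζ : ℝ × 𝔼 => (p, ζ)) (by fun_prop)).mul
        ((hb_cont p).comp continuous_snd))
      (fun ζ hζ => by simp only [hRa p ζ hζ, zero_mul])
  have ha_hat : Integrable (interiorFT a p) :=
    integrable_pairFT_of_decay (ha_int p) (by rw [finrank_real_prod hd]; omega) (hCa p)
  have hb_hat : ∀ p : ℝ × 𝔼, Integrable (tangentialFT b p) := fun p =>
    integrable_pairFT_of_decay (hb_int p) (by rw [finrank_euclideanSpace_fin]; omega) (hCb p)
  obtain ⟨Bu, hBu⟩ := huc.exists_bound_of_continuous hu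
  obtain ⟨Ru, hRu⟩ : ∃ R, ∀ p : ℝ × 𝔼, R < ‖p‖ → u p = 0 := by
    obtain ⟨R, hR⟩ := huc.isCompact.isBounded.subset_closedBall 0
    refine ⟨R, fun p hp => by_contra fun hc => ?_⟩
    have h1 := hR (subset_tsupport _ hc)
    rw [mem_closedBall_zero_iff] at h1
    exact absurd h1 (not_le.2 hp)
  have hu_slice : ∀ y : ℝ, Integrable fun x : 𝔼 => u (y, x) := fun y =>
    integrable_of_continuous_of_eq_zero (R := Ru) (by fun_prop)
      (fun x hx => hRu _ (hx.trans_le (le_max_right _ _)))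
  have hBeq : ∀ p : ℝ × 𝔼, opTangential d h b u p = frozenOp h b u p p := fun p =>
    opTangential_eq hh p (hb_int p) (hu_slice p.1)
  have hBbd : ∀ p p' : ℝ × 𝔼, ‖frozenOp h b u p p'‖ ≤
      ∫ w : 𝔼, Cb * (1 + ‖w‖) ^ (-(d : ℝ)) * Bu := by
    intro p p'
    refine norm_integral_le_of_norm_le (((integrable_weight hd).const_mul _).mul_const _)
      (Filter.Eventually.of_forall fun w => ?_)
    rw [norm_mul]
    exact mul_le_mul (hCb p w) (hBu _) (norm_nonneg _) (by positivity)
  have hv_int : Integrable (opTangential d h b u) :=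
    integrable_opTangential hb hu hRu (fun y x ξ hx => hRb y x ξ (Or.inl hx))
      (fun p => by rw [hBeq p]; exact hBbd p p)
  have hC : opProduct d h a b u p =
      ∫ z, interiorFT a p z * frozenOp h b u p (p + (2 * π * h) • z) :=
    (opProduct_eq hd hh p hab_int
      (integrable_of_continuous_of_eq_zero hu hRu)).trans
      (frozen_composition (ha_int p) ha_hat (hb_cont p) (hb_int p) (hb_hat p) hu hBu p _)
  have hA : opInterior d h a (opTangential d h b u) p =
      ∫ z, interiorFT a p z *
        frozenOp h b u (p + (2 * π * h) • z) (p + (2 * π * h) • z) := by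
    refine (opInterior_eq hd hh p (ha_int p) hv_int).trans ?_
    simp_rw [hBeq]
    rfl
  have hA_int : Integrable fun z => interiorFT a p z *
      frozenOp h b u (p + (2 * π * h) • z) (p + (2 * π * h) • z) := by
    refine ha_hat.mul_bdd ?_ (Filter.Eventually.of_forall fun z => hBbd _ _)
    have h1 : Integrable fun z : ℝ × 𝔼 => opTangential d h b u (p + (2 * π * h) • z) :=
      (hv_int.comp_add_left p).comp_smul hH0.ne'
    simp_rw [hBeq] at h1
    exact h1.aestronglyMeasurable
  have hC_int : Integrable fun z => interiorFT a p z *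
      frozenOp h b u p (p + (2 * π * h) • z) := by
    refine ha_hat.mul_bdd ?_ (Filter.Eventually.of_forall fun z => hBbd _ _)
    unfold frozenOp
    have hbc : Continuous (tangentialFT b p) := pairFT_continuous _ (hb_int p)
    refine (StronglyMeasurable.integral_prod_right (f := fun (z : ℝ × 𝔼) (w : 𝔼) =>
      tangentialFT b p w * u (p + (2 * π * h) • z + (0, (2 * π * h) • w)))
      (Continuous.stronglyMeasurable ?_)).aestronglyMeasurable
    simp only [Function.uncurry_def]
    fun_prop
  rw [hA, hC, ← integral_sub hA_int hC_int]
  refine (enorm_integral_le_lintegral_enorm _).trans ?_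
  rw [← lintegral_const_mul' _ _ ENNReal.ofReal_ne_top, lintegral_prod _ (by fun_prop)]
  refine lintegral_mono fun z => ?_
  rw [← mul_sub, enorm_mul]
  refine (mul_le_mul' (le_refl _)
    (enorm_frozenOp_sub_le hu hBu hb_hat hCb' p (p + (2 * π * h) • z))).trans ?_
  rw [← lintegral_const_mul' _ _ enorm_ne_top]
  refine lintegral_mono fun w => ?_
  rw [← mul_assoc ‖interiorFT a p z‖ₑ, ← mul_assoc (ENNReal.ofReal h), add_assoc,
    ← ofReal_norm (interiorFT a p z), ← ENNReal.ofReal_mul (norm_nonneg _),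
    ← ENNReal.ofReal_mul hh.le]
  refine mul_le_mul_left (ENNReal.ofReal_le_ofReal ?_) _
  rw [add_sub_cancel_left, norm_smul, Real.norm_of_nonneg hH0.le]
  -- the factor `‖z‖` from the increment of the base point costs one order of decay
  have h1 := norm_mul_weight_le (d + 1) (norm_nonneg z)
  calc ‖interiorFT a p z‖ * (2 * π * h * ‖z‖ * (Cb * (1 + ‖w‖) ^ (-(d : ℝ))))
      ≤ (Ca * (1 + ‖z‖) ^ (-((d + 2 : ℕ) : ℝ))) *
        (2 * π * h * ‖z‖ * (Cb * (1 + ‖w‖) ^ (-(d : ℝ)))) := by gcongr; exact hCa p z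
    _ = h * (2 * π * ((Ca * (‖z‖ * (1 + ‖z‖) ^ (-((d + 1 + 1 : ℕ) : ℝ)))) *
        (Cb * (1 + ‖w‖) ^ (-(d : ℝ))))) := by ring
    _ ≤ _ := by gcongr

end Operators

/-- **Composition of an interior and a tangential semiclassical operator.**
If the compactly supported interior symbol `a` vanishes for `y ≤ c₀` and for `|η| > C₀|ξ|`,
and `b` is a bounded tangential symbol with compact support in `(x,ξ)` uniformly in `y`,
then `A_h B_h = C_h + O_{L²→L²}(h)`, where `C_h` quantizes the product symbol `a·b`. -/
theorem stmt_12 (d : ℕ) (hd : 2 ≤ d) (c₀ C₀ : ℝ) (hc₀ : 0 < c₀) (hC₀ : 0 < C₀)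
    (a : ℝ → EuclideanSpace ℝ (Fin (d - 1)) → ℝ → EuclideanSpace ℝ (Fin (d - 1)) → ℂ)
    (ha_smooth : ContDiff ℝ (⊤ : ℕ∞) (fun q : (ℝ × EuclideanSpace ℝ (Fin (d - 1))) ×
        ℝ × EuclideanSpace ℝ (Fin (d - 1)) => a q.1.1 q.1.2 q.2.1 q.2.2))
    (ha_supp : HasCompactSupport (fun q : (ℝ × EuclideanSpace ℝ (Fin (d - 1))) ×
        ℝ × EuclideanSpace ℝ (Fin (d - 1)) => a q.1.1 q.1.2 q.2.1 q.2.2))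
    (ha_van : ∀ (y : ℝ) (x : EuclideanSpace ℝ (Fin (d - 1))) (η : ℝ)
        (ξ : EuclideanSpace ℝ (Fin (d - 1))),
        y ≤ c₀ ∨ C₀ * ‖ξ‖ < |η| → a y x η ξ = 0)
    (b : ℝ → EuclideanSpace ℝ (Fin (d - 1)) → EuclideanSpace ℝ (Fin (d - 1)) → ℂ)
    (hb_smooth : ContDiff ℝ (⊤ : ℕ∞) (fun q : (ℝ × EuclideanSpace ℝ (Fin (d - 1))) ×
        EuclideanSpace ℝ (Fin (d - 1)) => b q.1.1 q.1.2 q.2))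
    (hb_supp : ∃ K : Set (EuclideanSpace ℝ (Fin (d - 1)) × EuclideanSpace ℝ (Fin (d - 1))),
        IsCompact K ∧ ∀ (y : ℝ) (x ξ : EuclideanSpace ℝ (Fin (d - 1))),
          (x, ξ) ∉ K → b y x ξ = 0)
    (hb_der : ∀ m : ℕ, ∃ M : ℝ, ∀ q : (ℝ × EuclideanSpace ℝ (Fin (d - 1))) ×
        EuclideanSpace ℝ (Fin (d - 1)),
        ‖iteratedFDeriv ℝ m (fun q : (ℝ × EuclideanSpace ℝ (Fin (d - 1))) ×
            EuclideanSpace ℝ (Fin (d - 1)) => b q.1.1 q.1.2 q.2) q‖ ≤ M) :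
    ∃ C > 0, ∀ h ∈ Set.Ioc (0 : ℝ) 1,
      ∀ u : ℝ × EuclideanSpace ℝ (Fin (d - 1)) → ℂ,
        ContDiff ℝ (⊤ : ℕ∞) u → HasCompactSupport u →
        eLpNorm (fun p => opInterior d h a (opTangential d h b u) p - opProduct d h a b u p)
            2 volume ≤
          ENNReal.ofReal (C * h) * eLpNorm u 2 volume := by
  obtain ⟨Ra, hRa⟩ : ∃ R, ∀ p ζ : ℝ × EuclideanSpace ℝ (Fin (d - 1)),
      R < ‖ζ‖ → a p.1 p.2 ζ.1 ζ.2 = 0 := by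
    obtain ⟨R, hR⟩ := ha_supp.isCompact.isBounded.subset_closedBall 0
    refine ⟨R, fun p ζ hζ => by_contra fun hc => ?_⟩
    have h1 := hR (subset_tsupport _ (show (p, ζ) ∈ Function.support _ from hc))
    rw [mem_closedBall_zero_iff, Prod.norm_def] at h1
    exact absurd ((le_max_right _ _).trans h1) (not_le.2 hζ)
  obtain ⟨Rb, hRb⟩ : ∃ R, ∀ (y : ℝ) (x ξ : EuclideanSpace ℝ (Fin (d - 1))),
      R < ‖x‖ ∨ R < ‖ξ‖ → b y x ξ = 0 := by
    obtain ⟨K, hK, hK0⟩ := hb_supp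
    obtain ⟨R, hR⟩ := hK.isBounded.subset_closedBall 0
    refine ⟨R, fun y x ξ hx => hK0 y x ξ fun hc => ?_⟩
    have h1 := hR hc
    rw [mem_closedBall_zero_iff, Prod.norm_def] at h1
    rcases hx with hx | hx
    · exact absurd ((le_max_left _ _).trans h1) (not_le.2 hx)
    · exact absurd ((le_max_right _ _).trans h1) (not_le.2 hx)
  obtain ⟨Ca, hCa0, hCa, -⟩ := pairFT_slice_decay (prodPairing (d - 1)) prodPairing_self
    ha_smooth (fun m => (ha_supp.iteratedFDeriv m).exists_bound_of_continuous
      (ha_smooth.continuous_iteratedFDeriv (by exact_mod_cast le_top))) hRa (d + 2)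
  obtain ⟨Cb, hCb0, hCb, hCb'⟩ := pairFT_slice_decay (innerSL ℝ)
    (fun w => by rw [innerSL_apply_apply, real_inner_self_eq_norm_sq]) hb_smooth hb_der
    (fun p ξ hξ => hRb p.1 p.2 ξ (Or.inr hξ)) d
  -- `h * φ (z, w)` bounds the kernel of `A_h B_h - C_h`; the integral of `φ` gives the constant
  set φ : (ℝ × EuclideanSpace ℝ (Fin (d - 1))) × EuclideanSpace ℝ (Fin (d - 1)) → ℝ := fun q =>
    2 * π * ((Ca * (1 + ‖q.1‖) ^ (-((d + 1 : ℕ) : ℝ))) * (Cb * (1 + ‖q.2‖) ^ (-(d : ℝ)))) with hφ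
  have hφi : Integrable φ (volume.prod volume) := by
    have h1 : Integrable (fun z : ℝ × EuclideanSpace ℝ (Fin (d - 1)) =>
        Ca * (1 + ‖z‖) ^ (-((d + 1 : ℕ) : ℝ))) :=
      (integrable_one_add_norm (by rw [finrank_real_prod hd]; push_cast; linarith)).const_mul _
    exact (h1.mul_prod ((integrable_weight hd).const_mul Cb)).const_mul _
  set κ := ∫⁻ q, ENNReal.ofReal (φ q) ∂(volume.prod volume) with hκ
  have hκfin : κ ≠ ⊤ := hφi.lintegral_lt_top.ne
  -- `+ 1` ensures positivity even when `φ` vanishes identically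
  refine ⟨κ.toReal + 1, by positivity, fun h hh u hu huc => ?_⟩
  have hpt := enorm_difference_le hd ha_smooth.continuous hb_smooth.continuous hRa hRb hCa0 hCb0
    hCa hCb hCb' hh.1 hu.continuous huc
  have hW := lintegral_weighted_translates (V := ℝ × EuclideanSpace ℝ (Fin (d - 1)))
    (volume.prod volume) (Φ := fun q => ENNReal.ofReal (φ q)) (by fun_prop)
    (τ := fun q => (2 * π * h) • q.1 + (0, (2 * π * h) • q.2)) (by fun_prop)
    (U := fun p => ‖u p‖ₑ) (hu.continuous.measurable.enorm)
  refine (ENNReal.pow_le_pow_left_iff two_ne_zero).1 ?_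
  rw [mul_pow, eLpNorm_two_sq, eLpNorm_two_sq]
  calc _ ≤ ∫⁻ p, ENNReal.ofReal h ^ 2 * (∫⁻ q, ENNReal.ofReal (φ q) *
        ‖u (p + ((2 * π * h) • q.1 + (0, (2 * π * h) • q.2)))‖ₑ ∂(volume.prod volume)) ^ 2 := by
        refine lintegral_mono fun p => ?_
        rw [← mul_pow]
        exact pow_le_pow_left' (hpt p) 2
    _ = ENNReal.ofReal h ^ 2 * ∫⁻ p, (∫⁻ q, ENNReal.ofReal (φ q) *
        ‖u (p + ((2 * π * h) • q.1 + (0, (2 * π * h) • q.2)))‖ₑ ∂(volume.prod volume)) ^ 2 :=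
        lintegral_const_mul' _ _ (by simp)
    _ ≤ ENNReal.ofReal h ^ 2 * (κ ^ 2 * ∫⁻ p, ‖u p‖ₑ ^ 2) := by gcongr
    _ = (κ * ENNReal.ofReal h) ^ 2 * ∫⁻ p, ‖u p‖ₑ ^ 2 := by ring
    _ ≤ _ := by
        gcongr
        rw [ENNReal.ofReal_mul (by positivity)]
        gcongr
        rw [ENNReal.le_ofReal_iff_toReal_le hκfin (by positivity)]
        linarith
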